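/- Let β ∈ (1,2), λ ∈ ℂ, c₁, c₂ ∈ ℂ, and define u(t) = c₁ E_{β,1}(−λ t^β) + c₂ t E_{β,2}(−λ t^β) for t ≥ 0. Then u(0) = c₁, u′(0) = c₂, u is twice differentiable on (0,∞) with u″ integrable near 0, and for every t > 0 the Caputo fractional derivative of order β of u satisfies (1/Γ(2−β)) ∫₀^t u″(τ) (t−τ)^{1−β} dτ = −λ u(t). -/

import Mathlib

open scoped Real
open MeasureTheory

/-- Generalized Mittag-Leffler function `E_{α,γ}(z) = ∑ zⁿ / Γ(αn + γ)`. -/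
noncomputable def mittagLeffler (α γ : ℝ) (z : ℂ) : ℂ :=
  ∑' n : ℕ, z ^ n / (Real.Gamma (α * n + γ) : ℂ)

open Filter Topology Set in
lemma ml_summable {β γ : ℝ} (hβ : 1 < β) (hγ : 0 < γ) (r : ℝ) (hr : 0 ≤ r) :
    Summable (fun n : ℕ => r ^ n / Real.Gamma (β * n + γ)) := by
  have h0 : Summable (fun n : ℕ => r ^ 2 * (r ^ n / (n.factorial : ℝ))) :=
    (Real.summable_pow_div_factorial r).mul_left _
  rw [← summable_nat_add_iff 2]
  refine Summable.of_nonneg_of_le (fun n => ?_) (fun n => ?_) h0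
  · have : 0 < Real.Gamma (β * ((n + 2 : ℕ) : ℝ) + γ) := Real.Gamma_pos_of_pos (by positivity)
    positivity
  · have h1 : (n.factorial : ℝ) ≤ Real.Gamma (β * ((n + 2 : ℕ) : ℝ) + γ) := by
      have h2 : ((n + 1).factorial : ℝ) ≤ Real.Gamma (β * ((n + 2 : ℕ) : ℝ) + γ) := by
        rw [← Real.Gamma_nat_eq_factorial]
        have hn : (0 : ℝ) ≤ n := Nat.cast_nonneg n
        apply Real.Gamma_strictMonoOn_Ici.monotoneOn
        · simp only [mem_Ici]; push_cast; linarith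
        · simp only [mem_Ici]; push_cast; nlinarith
        · push_cast; nlinarith
      refine le_trans ?_ h2
      exact_mod_cast Nat.factorial_le (Nat.le_succ n)
    have hf : (0 : ℝ) < n.factorial := by exact_mod_cast n.factorial_pos
    rw [pow_add, mul_comm (r ^ n), mul_div_assoc]
    gcongr

lemma ml_norm_term {β γ : ℝ} (hβ : 1 < β) (hγ : 0 < γ) (z : ℂ) (n : ℕ) :
    ‖z ^ n / (Real.Gamma (β * n + γ) : ℂ)‖ = ‖z‖ ^ n / Real.Gamma (β * n + γ) := by
  have : 0 < Real.Gamma (β * n + γ) := Real.Gamma_pos_of_pos (by positivity)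
  rw [norm_div, norm_pow, Complex.norm_real, Real.norm_of_nonneg this.le]

lemma ml_summable' {β γ : ℝ} (hβ : 1 < β) (hγ : 0 < γ) (z : ℂ) :
    Summable (fun n : ℕ => z ^ n / (Real.Gamma (β * n + γ) : ℂ)) := by
  apply Summable.of_norm
  simp_rw [ml_norm_term hβ hγ]
  exact ml_summable hβ hγ _ (norm_nonneg _)

lemma ml_zero (β γ : ℝ) : mittagLeffler β γ 0 = 1 / (Real.Gamma γ : ℂ) := by
  unfold mittagLeffler
  rw [tsum_eq_single 0]
  · simp
  · intro n hn; simp [hn]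

lemma ml_succ {β γ : ℝ} (hβ : 1 < β) (hγ : 0 < γ) (z : ℂ) :
    mittagLeffler β γ z = 1 / (Real.Gamma γ : ℂ) + z * mittagLeffler β (β + γ) z := by
  unfold mittagLeffler
  rw [(ml_summable' hβ hγ z).tsum_eq_zero_add, ← tsum_mul_left]
  congr 1
  · simp
  · congr 1; ext n
    rw [pow_succ', mul_div_assoc]
    congr 4; push_cast; ring

lemma ml_continuous {β γ : ℝ} (hβ : 1 < β) (hγ : 0 < γ) : Continuous (mittagLeffler β γ) := by
  rw [continuous_iff_continuousAt]
  intro z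
  have : ContinuousOn (mittagLeffler β γ) (Metric.ball 0 (‖z‖ + 1)) := by
    unfold mittagLeffler
    refine continuousOn_tsum (fun n => by fun_prop)
      (ml_summable hβ hγ (‖z‖ + 1) (by positivity)) ?_
    intro n x hx
    have : 0 < Real.Gamma (β * n + γ) := Real.Gamma_pos_of_pos (by positivity)
    rw [ml_norm_term hβ hγ]
    have : ‖x‖ ≤ ‖z‖ + 1 := by simpa using (mem_ball_zero_iff.1 hx).le
    gcongr
  exact this.continuousAt (Metric.isOpen_ball.mem_nhds (by simp))

lemma real_beta {p q t : ℝ} (hp : 0 < p) (hq : 0 < q) (ht : 0 < t) :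
    ∫ x in (0:ℝ)..t, x ^ (p - 1) * (t - x) ^ (q - 1) =
      t ^ (p + q - 1) * (Real.Gamma p * Real.Gamma q / Real.Gamma (p + q)) := by
  have h := Complex.betaIntegral_scaled p q ht
  rw [Complex.betaIntegral_eq_Gamma_mul_div _ _ (by simpa) (by simpa)] at h
  apply Complex.ofReal_injective
  rw [← intervalIntegral.integral_ofReal]
  push_cast [Complex.Gamma_ofReal, Complex.ofReal_cpow ht.le]
  rw [← Complex.ofReal_add] at h ⊢
  simp only [Complex.Gamma_ofReal] at h ⊢
  rw [Complex.ofReal_add] at h ⊢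
  simp only [← Complex.Gamma_ofReal] at h ⊢
  rw [← h]
  apply intervalIntegral.integral_congr
  intro x hx
  rw [Set.uIcc_of_le ht.le] at hx
  have h1 : (0:ℝ) ≤ t - x := by linarith [hx.2]
  simp only
  rw [Complex.ofReal_cpow hx.1, Complex.ofReal_cpow h1]
  push_cast
  rfl

lemma HasSum.congr_fun' {f g : ℕ → ℂ} {a : ℂ} (h : HasSum f a) (e : ∀ n, g n = f n) :
    HasSum g a := by
  rw [show g = f from funext e]; exact h

lemma ii_ofReal {f : ℝ → ℝ} {a b : ℝ} (h : IntervalIntegrable f volume a b) :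
    IntervalIntegrable (fun x => ((f x : ℝ) : ℂ)) volume a b :=
  ⟨Integrable.ofReal h.1, Integrable.ofReal h.2⟩

noncomputable def mlF (β γ : ℝ) (lam : ℂ) (t : ℝ) : ℂ :=
  ((t ^ (γ - 1) : ℝ) : ℂ) * mittagLeffler β γ (-lam * ((t ^ β : ℝ) : ℂ))

lemma mlE_continuous {β γ : ℝ} (hβ : 1 < β) (hγ : 0 < γ) (lam : ℂ) :
    Continuous (fun t : ℝ => mittagLeffler β γ (-lam * ((t ^ β : ℝ) : ℂ))) := by
  have : Continuous (fun t : ℝ => t ^ β) := Real.continuous_rpow_const (by linarith)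
  exact (ml_continuous hβ hγ).comp (by fun_prop)

lemma mlF_integrable {β γ : ℝ} (hβ : 1 < β) (hγ : 0 < γ) (lam : ℂ) (a b : ℝ) :
    IntervalIntegrable (mlF β γ lam) volume a b := by
  unfold mlF
  apply IntervalIntegrable.mul_continuousOn _ (mlE_continuous hβ hγ lam).continuousOn
  have := intervalIntegral.intervalIntegrable_rpow' (a := a) (b := b) (r := γ - 1) (by linarith)
  exact ii_ofReal this

lemma mlF_continuousAt {β γ : ℝ} (hβ : 1 < β) (hγ : 0 < γ) (lam : ℂ) {t : ℝ} (ht : 0 < t) :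
    ContinuousAt (mlF β γ lam) t := by
  unfold mlF
  refine ContinuousAt.mul ?_ (mlE_continuous hβ hγ lam).continuousAt
  exact Complex.continuous_ofReal.continuousAt.comp
    (Real.continuousAt_rpow_const _ _ (Or.inl ht.ne'))

lemma mlF_hasSum {β γ : ℝ} (hβ : 1 < β) (hγ : 0 < γ) (lam : ℂ) {t : ℝ} (ht : 0 < t) :
    HasSum (fun n : ℕ => (-lam) ^ n / (Real.Gamma (β * n + γ) : ℂ) *
      ((t ^ (β * n + γ - 1) : ℝ) : ℂ)) (mlF β γ lam t) := by
  have h := ((ml_summable' hβ hγ (-lam * ((t ^ β : ℝ) : ℂ))).hasSum).mul_left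
    ((t ^ (γ - 1) : ℝ) : ℂ)
  unfold mlF mittagLeffler
  refine h.congr_fun' (fun n => ?_)
  rw [show β * n + γ - 1 = (γ - 1) + β * n by ring, Real.rpow_add ht, Real.rpow_mul ht.le,
    Real.rpow_natCast]
  push_cast
  ring

lemma mlF_frac {β γ a : ℝ} (hβ : 1 < β) (hγ : 0 < γ) (ha : 0 < a) (lam : ℂ) {t : ℝ} (ht : 0 < t) :
    IntervalIntegrable (fun τ => mlF β γ lam τ * (((t - τ) ^ (a - 1) : ℝ) : ℂ)) volume 0 t ∧
    ∫ τ in (0:ℝ)..t, mlF β γ lam τ * (((t - τ) ^ (a - 1) : ℝ) : ℂ) =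
      (Real.Gamma a : ℂ) * mlF β (γ + a) lam t := by
  have hp : ∀ n : ℕ, 0 < β * n + γ := fun n => by positivity
  have hGp : ∀ n : ℕ, 0 < Real.Gamma (β * n + γ) := fun n => Real.Gamma_pos_of_pos (hp n)
  have hGpa : ∀ n : ℕ, 0 < Real.Gamma (β * n + γ + a) :=
    fun n => Real.Gamma_pos_of_pos (by linarith [hp n])
  have hGa := Real.Gamma_pos_of_pos ha
  let c : ℕ → ℂ := fun n => (-lam) ^ n / (Real.Gamma (β * n + γ) : ℂ)
  let k : ℕ → ℝ → ℝ := fun n τ => τ ^ (β * n + γ - 1) * (t - τ) ^ (a - 1)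
  let G : ℕ → ℝ → ℂ := fun n τ => c n * ((k n τ : ℝ) : ℂ)
  have hkint : ∀ n, ∫ τ in Set.Ioc 0 t, k n τ = t ^ (β * n + γ + a - 1) *
      (Real.Gamma (β * n + γ) * Real.Gamma a / Real.Gamma (β * n + γ + a)) := fun n => by
    rw [← intervalIntegral.integral_of_le ht.le]
    exact real_beta (hp n) ha ht
  have hki : ∀ n, Integrable (k n) (volume.restrict (Set.Ioc 0 t)) := fun n => by
    apply Integrable.of_integral_ne_zero
    rw [hkint n]
    have := hGp n
    have := hGpa n
    positivity
  have hGi : ∀ n, Integrable (G n) (volume.restrict (Set.Ioc 0 t)) := fun n =>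
    ((hki n).ofReal).const_mul (c n)
  have hknn : ∀ n, ∀ τ ∈ Set.Ioc 0 t, 0 ≤ k n τ := fun n τ hτ => by
    have h1 := hτ.1
    have h2 : 0 ≤ t - τ := by linarith [hτ.2]
    simp only [k]
    positivity
  have hnorm : ∀ n, ∫ τ in Set.Ioc 0 t, ‖G n τ‖ =
      (Real.Gamma a * t ^ (γ + a - 1)) *
        ((‖lam‖ * t ^ β) ^ n / Real.Gamma (β * n + (γ + a))) := fun n => by
    have : ∫ τ in Set.Ioc 0 t, ‖G n τ‖ = ∫ τ in Set.Ioc 0 t, ‖c n‖ * k n τ := by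
      apply setIntegral_congr_fun measurableSet_Ioc
      intro τ hτ
      simp only [G, norm_mul, Complex.norm_real, Real.norm_of_nonneg (hknn n τ hτ)]
    rw [this, integral_const_mul, hkint n]
    simp only [c]
    rw [ml_norm_term hβ hγ, norm_neg]
    rw [show β * n + γ + a - 1 = (γ + a - 1) + β * n by ring, Real.rpow_add ht,
      Real.rpow_mul ht.le, Real.rpow_natCast, ← add_assoc, mul_pow]
    have := (hGp n).ne'
    have := (hGpa n).ne'
    field_simp
  have hsum : Summable (fun n => ∫ τ in Set.Ioc 0 t, ‖G n τ‖) := by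
    simp_rw [hnorm]
    exact (ml_summable hβ (by linarith) _ (by positivity)).mul_left _
  have key := hasSum_integral_of_summable_integral_norm hGi hsum
  have hGt : ∀ τ ∈ Set.Ioc 0 t, ∑' n, G n τ = mlF β γ lam τ * (((t - τ) ^ (a - 1) : ℝ) : ℂ) := by
    intro τ hτ
    rw [← ((mlF_hasSum hβ hγ lam hτ.1).mul_right _).tsum_eq]
    congr 1; ext n
    simp only [G, c, k]; push_cast; ring
  have hI : ∫ τ in Set.Ioc 0 t, ∑' n, G n τ =
      ∫ τ in Set.Ioc 0 t, mlF β γ lam τ * (((t - τ) ^ (a - 1) : ℝ) : ℂ) :=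
    setIntegral_congr_fun measurableSet_Ioc hGt
  constructor
  · -- integrability
    have hg : IntervalIntegrable
        (fun τ : ℝ => τ ^ (γ - 1) * (t - τ) ^ (a - 1)) volume 0 t := by
      rw [intervalIntegrable_iff_integrableOn_Ioc_of_le ht.le]
      simpa [k, IntegrableOn] using hki 0
    have := IntervalIntegrable.mul_continuousOn (ii_ofReal hg)
      (mlE_continuous hβ hγ lam).continuousOn
    refine this.congr ?_
    intro τ _
    simp only [mlF]; push_cast; ring
  · rw [intervalIntegral.integral_of_le ht.le, ← hI]
    refine key.unique ?_
    have h2 := (mlF_hasSum hβ (by linarith : 0 < γ + a) lam ht).mul_left (Real.Gamma a : ℂ)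
    refine h2.congr_fun' (fun n => ?_)
    simp only [G]
    rw [integral_const_mul, integral_complex_ofReal, hkint n]
    simp only [c]
    rw [← add_assoc]
    have h3 : (Real.Gamma (β * n + γ) : ℂ) ≠ 0 := by exact_mod_cast (hGp n).ne'
    have h4 : (Real.Gamma (β * n + γ + a) : ℂ) ≠ 0 := by exact_mod_cast (hGpa n).ne'
    push_cast
    field_simp

open Filter Topology in
lemma mlF_hasDerivAt {β γ : ℝ} (hβ : 1 < β) (hγ : 0 < γ) (lam : ℂ) {t : ℝ} (ht : 0 < t) :
    HasDerivAt (mlF β (γ + 1) lam) (mlF β γ lam t) t := by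
  have h := intervalIntegral.integral_hasDerivAt_right (mlF_integrable hβ hγ lam 0 t)
    (ContinuousAt.stronglyMeasurableAtFilter isOpen_Ioi
      (fun x (hx : x ∈ Set.Ioi 0) => mlF_continuousAt hβ hγ lam hx) t ht)
    (mlF_continuousAt hβ hγ lam ht)
  refine h.congr_of_eventuallyEq ?_
  filter_upwards [Ioi_mem_nhds ht] with x hx
  have := (mlF_frac hβ hγ one_pos lam hx).2
  simpa using this.symm

lemma mlF_one {β : ℝ} (hβ : 1 < β) (lam : ℂ) (t : ℝ) :
    mlF β 1 lam t = 1 + -lam * mlF β (β + 1) lam t := by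
  unfold mlF
  rw [ml_succ hβ one_pos]
  simp
  ring

open Filter Topology in
lemma hasDerivAt_mul_cont {h g : ℝ → ℂ} {d : ℂ} (hh : HasDerivAt h d 0) (h0 : h 0 = 0)
    (hg : ContinuousAt g 0) : HasDerivAt (fun t => h t * g t) (d * g 0) 0 := by
  rw [hasDerivAt_iff_tendsto_slope] at *
  have := hh.mul (hg.tendsto.mono_left (nhdsWithin_le_nhds (s := {0}ᶜ)))
  refine this.congr fun t => ?_
  simp [slope_def_module, h0, mul_assoc]

/-- For `β ∈ (1,2)`, the function `u(t) = c₁ E_{β,1}(-λ t^β) + c₂ t E_{β,2}(-λ t^β)`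
satisfies `u(0) = c₁`, `u′(0) = c₂`, is twice differentiable on `(0,∞)` with `u″`
integrable near `0`, and its Caputo derivative of order `β` equals `-λ u(t)`:
`(1/Γ(2-β)) ∫₀^t u″(τ) (t-τ)^{1-β} dτ = -λ u(t)` for all `t > 0`. -/
theorem caputo_mittagLeffler_eigen_order_two (β : ℝ) (hβ : β ∈ Set.Ioo (1 : ℝ) 2)
    (lam c₁ c₂ : ℂ) (u : ℝ → ℂ)
    (hu : ∀ t : ℝ, u t =
      c₁ * mittagLeffler β 1 (-lam * ((t ^ β : ℝ) : ℂ)) +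
      c₂ * (t : ℂ) * mittagLeffler β 2 (-lam * ((t ^ β : ℝ) : ℂ))) :
    u 0 = c₁ ∧ deriv u 0 = c₂ ∧
      (∀ t : ℝ, 0 < t → DifferentiableAt ℝ u t ∧ DifferentiableAt ℝ (deriv u) t) ∧
      IntegrableOn (deriv (deriv u)) (Set.Ioc 0 1) ∧
      ∀ t : ℝ, 0 < t →
        (1 / (Real.Gamma (2 - β) : ℂ)) *
            ∫ τ in (0 : ℝ)..t, deriv (deriv u) τ * (((t - τ) ^ (1 - β) : ℝ) : ℂ) =
          -lam * u t := by
  obtain ⟨hβ1, hβ2⟩ := hβ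
  have hβ0 : 0 < β - 1 := by linarith
  have hu' : ∀ t : ℝ, u t = c₁ * mlF β 1 lam t + c₂ * mlF β 2 lam t := by
    intro t
    rw [hu t]; unfold mlF
    rw [show (2 : ℝ) - 1 = 1 by norm_num]
    simp
    ring
  have hd1 : ∀ t : ℝ, 0 < t →
      HasDerivAt u (c₁ * (-lam * mlF β β lam t) + c₂ * mlF β 1 lam t) t := by
    intro t ht
    have e : u = fun t => c₁ * (1 + -lam * mlF β (β + 1) lam t) + c₂ * mlF β (1 + 1) lam t := by
      ext t
      rw [hu' t, mlF_one hβ1, one_add_one_eq_two]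
    rw [e]
    exact ((((mlF_hasDerivAt hβ1 (by linarith) lam ht).const_mul (-lam)).const_add 1).const_mul
      c₁).add ((mlF_hasDerivAt hβ1 one_pos lam ht).const_mul c₂)
  have hd2 : ∀ t : ℝ, 0 < t → HasDerivAt (deriv u)
      (c₁ * (-lam * mlF β (β - 1) lam t) + c₂ * (-lam * mlF β β lam t)) t := by
    intro t ht
    have h1 := mlF_hasDerivAt hβ1 hβ0 lam ht
    rw [sub_add_cancel] at h1
    have h2 : HasDerivAt (mlF β 1 lam) (-lam * mlF β β lam t) t := by
      have e : mlF β 1 lam = fun t => 1 + -lam * mlF β (β + 1) lam t := by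
        ext t; exact mlF_one hβ1 lam t
      rw [e]
      exact ((mlF_hasDerivAt hβ1 (by linarith) lam ht).const_mul (-lam)).const_add 1
    refine (((h1.const_mul (-lam)).const_mul c₁).add (h2.const_mul c₂)).congr_of_eventuallyEq ?_
    filter_upwards [Ioi_mem_nhds ht] with x hx
    exact (hd1 x hx).deriv
  refine ⟨?_, ?_, ?_, ?_, ?_⟩
  · rw [hu 0, Real.zero_rpow (by linarith)]
    simp [ml_zero]
  · have e : u = fun t : ℝ => c₁ * (1 + ((t ^ β : ℝ) : ℂ) *
        (-lam * mittagLeffler β (β + 1) (-lam * ((t ^ β : ℝ) : ℂ)))) +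
        c₂ * ((t : ℂ) * mittagLeffler β 2 (-lam * ((t ^ β : ℝ) : ℂ))) := by
      ext t
      rw [hu t, ml_succ hβ1 one_pos]
      simp
      ring
    have hA : HasDerivAt (fun t : ℝ => ((t ^ β : ℝ) : ℂ)) 0 0 := by
      have := (Real.hasDerivAt_rpow_const (x := 0) (p := β) (Or.inr hβ1.le)).ofReal_comp
      rw [Real.zero_rpow (by linarith)] at this
      simpa using this
    have hB : HasDerivAt (fun t : ℝ => (t : ℂ)) 1 0 := by
      simpa using (hasDerivAt_id (0 : ℝ)).ofReal_comp
    have h1 := hasDerivAt_mul_cont hA (by rw [Real.zero_rpow (by linarith)]; simp)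
      (((mlE_continuous hβ1 (by linarith : 0 < β + 1) lam).const_mul (-lam)).continuousAt)
    have h2 := hasDerivAt_mul_cont hB (by simp)
      ((mlE_continuous hβ1 two_pos lam).continuousAt)
    have h3 := ((h1.const_add 1).const_mul c₁).add (h2.const_mul c₂)
    rw [e]
    refine h3.deriv.trans ?_
    rw [Real.zero_rpow (by linarith)]
    simp [ml_zero]
  · exact fun t ht => ⟨(hd1 t ht).differentiableAt, (hd2 t ht).differentiableAt⟩
  · have h := (((mlF_integrable hβ1 hβ0 lam 0 1).const_mul (-lam)).const_mul c₁).add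
      (((mlF_integrable hβ1 (by linarith : 0 < β) lam 0 1).const_mul (-lam)).const_mul c₂)
    rw [intervalIntegrable_iff_integrableOn_Ioc_of_le zero_le_one] at h
    refine h.congr_fun ?_ measurableSet_Ioc
    intro t ht
    exact (hd2 t ht.1).deriv.symm
  · intro t ht
    have ha : 0 < 2 - β := by linarith
    obtain ⟨i1, e1⟩ := mlF_frac hβ1 hβ0 ha lam ht
    obtain ⟨i2, e2⟩ := mlF_frac hβ1 (by linarith : 0 < β) ha lam ht
    rw [show 2 - β - 1 = 1 - β by ring] at i1 e1 i2 e2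
    rw [show β - 1 + (2 - β) = 1 by ring] at e1
    rw [show β + (2 - β) = 2 by ring] at e2
    have hI : ∫ τ in (0 : ℝ)..t, deriv (deriv u) τ * (((t - τ) ^ (1 - β) : ℝ) : ℂ) =
        ∫ τ in (0 : ℝ)..t, ((c₁ * -lam) * (mlF β (β - 1) lam τ * (((t - τ) ^ (1 - β) : ℝ) : ℂ)) +
          (c₂ * -lam) * (mlF β β lam τ * (((t - τ) ^ (1 - β) : ℝ) : ℂ))) := by
      rw [intervalIntegral.integral_of_le ht.le, intervalIntegral.integral_of_le ht.le]
      apply setIntegral_congr_fun measurableSet_Ioc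
      intro τ hτ
      simp only
      rw [(hd2 τ hτ.1).deriv]
      ring
    rw [hI, intervalIntegral.integral_add (i1.const_mul _) (i2.const_mul _),
      intervalIntegral.integral_const_mul, intervalIntegral.integral_const_mul, e1, e2, hu' t]
    have : (Real.Gamma (2 - β) : ℂ) ≠ 0 := by exact_mod_cast (Real.Gamma_pos_of_pos ha).ne'
    field_simp
    ring
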